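/- If T(x) ⊆ S, then V(x) ⊆ πS; that is, every weak* limit point of the sequence of empirical measures (e_n(x))_{n≥1} is a convex combination Σ_{j=1}^d p_j·δ_{ξ_j} with p̄ ∈ S. -/

import Mathlib

open MeasureTheory Filter Topology Set
open scoped ENNReal

noncomputable section

variable {X : Type*} [MetricSpace X] [CompactSpace X] [MeasurableSpace X] [BorelSpace X]

/-- The `n`-th empirical measure `e_n(x) = (1/n) ∑_{k<n} δ_{f^k x}`. -/
def empMeasure (f : X → X) (n : ℕ) (x : X) : Measure X :=
  (n : ℝ≥0∞)⁻¹ • ∑ k ∈ Finset.range n, Measure.dirac (f^[k] x)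

/-- Weak* convergence of a sequence of measures, tested against bounded continuous functions. -/
def WeakTendsto (μ : ℕ → Measure X) (ν : Measure X) : Prop :=
  ∀ g : BoundedContinuousFunction X ℝ,
    Tendsto (fun n => ∫ y, g y ∂(μ n)) atTop (𝓝 (∫ y, g y ∂ν))

/-- `V(x)`: the set of weak* limit points of `(e_n(x))_{n ≥ 1}`. -/
def Vset (f : X → X) (x : X) : Set (Measure X) :=
  {ν | ∃ φ : ℕ → ℕ, StrictMono φ ∧ WeakTendsto (fun k => empMeasure f (φ k + 1) x) ν}

/-- The simplex `S = {p̄ ∈ [0,1]^d : p₁ + ⋯ + p_d = 1}`. -/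
def simplexS (d : ℕ) : Set (Fin d → ℝ) :=
  {p | (∀ i, p i ∈ Set.Icc (0:ℝ) 1) ∧ ∑ i, p i = 1}

/-- The measure `ν_p̄ = ∑_j p_j δ_{ξ_j}`. -/
def nuMeasure {d : ℕ} (ξ : Fin d → X) (p : Fin d → ℝ) : Measure X :=
  ∑ j, ENNReal.ofReal (p j) • Measure.dirac (ξ j)

/-- The first hit time `τ(x) = min {n ≥ 1 : f^n(x) ∈ Y}` (junk value `0` if the orbit
never hits `Y`). -/
def hitTime (f : X → X) (Y : Set X) (x : X) : ℕ :=
  sInf {n | 1 ≤ n ∧ f^[n] x ∈ Y}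

/-- The first return map `F = f^τ`. -/
def retMap (f : X → X) (Y : Set X) (x : X) : X :=
  f^[hitTime f Y x] x

/-- The Birkhoff sums `τ_k(x) = ∑_{j<k} τ(F^j x)` of the return time under `F`. -/
def tauSum (f : X → X) (Y : Set X) (k : ℕ) (x : X) : ℕ :=
  ∑ j ∈ Finset.range k, hitTime f Y ((retMap f Y)^[j] x)

/-- `τ^{(i)}(y) = #{1 ≤ n ≤ τ(y) : f^n(y) ∈ A}` (with `A = X_i`). -/
def tauJ (f : X → X) (Y A : Set X) (y : X) : ℕ :=
  ∑ n ∈ Finset.Icc 1 (hitTime f Y y), A.indicator (fun _ => 1) (f^[n] y)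

/-- The Birkhoff sums `τ^{(i)}_k(x) = ∑_{j<k} τ^{(i)}(F^j x)`. -/
def tauJSum (f : X → X) (Y A : Set X) (k : ℕ) (x : X) : ℕ :=
  ∑ j ∈ Finset.range k, tauJ f Y A ((retMap f Y)^[j] x)

/-- The vector of ratios `τ̄_k(x)/τ_k(x) ∈ [0,1]^d`. -/
def tauRatio (f : X → X) (Y : Set X) {d : ℕ} (Xp : Fin d → Set X) (k : ℕ) (x : X) :
    Fin d → ℝ :=
  fun i => (tauJSum f Y (Xp i) k x : ℝ) / (tauSum f Y k x : ℝ)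

/-- `T(x) ⊆ [0,1]^d`: the set of limit points of the sequence `(τ̄_k(x)/τ_k(x))_{k ≥ 1}`. -/
def Tset (f : X → X) (Y : Set X) {d : ℕ} (Xp : Fin d → Set X) (x : X) :
    Set (Fin d → ℝ) :=
  {p | ∃ φ : ℕ → ℕ, StrictMono φ ∧
    Tendsto (fun k => tauRatio f Y Xp (φ k + 1) x) atTop (𝓝 p)}

/-! At each return to `Y` the orbit is in no `X_i`, so `∑ᵢ τ⁽ⁱ⁾_k + k ≤ τ_k`. The ratios
`τ̄_k / τ_k` stay in the compact cube `[0,1]^d` and all their limit points have coordinate sum `1`,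
hence `k / τ_k → 0`. If `N_n` denotes the number of visits to `Y` at the times `1, …, n`, then
`τ_{N_n} ≤ n`, so `N_n / n ≤ N_n / τ_{N_n} → 0`: the orbit visits `Y` with frequency zero.
A compact set `K` avoiding the `ξ_j` is covered by finitely many preimages `f^{-r}(Y)`, because hit
times are bounded on `K`, and asymptotic frequencies are invariant under preimages; hence `K` has
frequency zero as well. By the portmanteau theorem a weak* limit of the empirical measures gives no
mass to the interior of `K`, and as `K` varies these interiors cover the complement of `{ξ_j}`. -/

lemma tendsto_comp_of_forall_subseq_limit {E F : Type*} [TopologicalSpace E] [TopologicalSpace F]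
    {K : Set E} (hK : IsSeqCompact K) {u : ℕ → E} (hu : ∀ n, u n ∈ K) {g : E → F}
    (hg : Continuous g) {c : F}
    (hlim : ∀ (φ : ℕ → ℕ) (p : E), StrictMono φ → Tendsto (u ∘ φ) atTop (𝓝 p) → g p = c) :
    Tendsto (g ∘ u) atTop (𝓝 c) := by
  refine tendsto_of_subseq_tendsto fun ns hns => ?_
  obtain ⟨φ, -, hφ⟩ := strictMono_subseq_of_tendsto_atTop hns
  obtain ⟨p, -, ψ, hψ, hp⟩ := hK fun n => hu (ns (φ n))
  refine ⟨φ ∘ ψ, ?_⟩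
  rw [← hlim _ p (hφ.comp hψ) hp]
  exact (hg.tendsto p).comp hp

section TimeChange

variable {α M : Type*} [AddCommMonoid M] (f : α → α) (T : α → ℕ)

/-- The map `y ↦ f^{T(y)}(y)`, which runs `f` for a state-dependent time `T`; the first return
map to `Y` is the case `T = hitTime f Y`. -/
def timeChange (y : α) : α :=
  f^[T y] y

lemma iterate_timeChange (k : ℕ) (x : α) :
    (timeChange f T)^[k] x = f^[birkhoffSum (timeChange f T) T k x] x := by
  induction k with
  | zero => rfl
  | succ k ih =>
    rw [Function.iterate_succ_apply', birkhoffSum_succ, add_comm, Function.iterate_add_apply,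
      ← ih, timeChange]

lemma birkhoffSum_timeChange (g : α → M) (k : ℕ) (x : α) :
    birkhoffSum (timeChange f T) (fun y => birkhoffSum f g (T y) y) k x =
      birkhoffSum f g (birkhoffSum (timeChange f T) T k x) x := by
  induction k with
  | zero => rfl
  | succ k ih =>
    rw [birkhoffSum_succ, ih, birkhoffSum_succ, birkhoffSum_add, iterate_timeChange]

lemma birkhoffSum_comp_self (g : α → M) (n : ℕ) (x : α) :
    birkhoffSum f (g ∘ f) n x = birkhoffSum f g n (f x) := by
  simp only [birkhoffSum, Function.comp_apply, ← Function.iterate_succ_apply',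
    Function.iterate_succ_apply]

end TimeChange

section VisitCount

variable {α : Type*} {f : α → α} {A : Set α} {x : α} {n : ℕ}

/-- The number of visits of the orbit of `x` to `A` during the times `0, …, n - 1`. Visits during
`1, …, n`, as counted by `tauJ`, are visits to `f ⁻¹' A` in this indexing. -/
def visitCount (f : α → α) (A : Set α) (n : ℕ) (x : α) : ℕ :=
  birkhoffSum f (A.indicator 1) n x

lemma visitCount_succ_of_mem (h : f^[n] x ∈ A) :
    visitCount f A (n + 1) x = visitCount f A n x + 1 := by
  rw [visitCount, birkhoffSum_succ, indicator_of_mem h, Pi.one_apply, visitCount]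

lemma monotone_visitCount (f : α → α) (A : Set α) (x : α) :
    Monotone fun n => visitCount f A n x :=
  monotone_nat_of_le_succ fun n => by
    rw [visitCount, visitCount, birkhoffSum_succ]
    exact Nat.le_add_right _ _

end VisitCount

section ZeroFrequency

variable {α ι : Type*} {f : α → α} {A Y : Set α} {x : α}

/-- The proportion of the times `0, …, n - 1` at which the orbit of `x` is in `A`. -/
def visitFrequency (f : α → α) (A : Set α) (n : ℕ) (x : α) : ℝ :=
  birkhoffAverage ℝ f (A.indicator 1) n x

/-- The orbit of `x` visits `A` with asymptotic frequency zero. -/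
def HasZeroFrequency (f : α → α) (A : Set α) (x : α) : Prop :=
  Tendsto (fun n => visitFrequency f A n x) atTop (𝓝 0)

lemma visitFrequency_eq_div (f : α → α) (A : Set α) (n : ℕ) (x : α) :
    visitFrequency f A n x = visitCount f A n x / n := by
  have hcast (z : α) : ((A.indicator 1 z : ℕ) : ℝ) = A.indicator 1 z := by
    by_cases hz : z ∈ A <;> simp [hz]
  simp only [visitFrequency, visitCount, birkhoffAverage, birkhoffSum, Nat.cast_sum, hcast,
    smul_eq_mul, inv_mul_eq_div]

lemma visitFrequency_nonneg (f : α → α) (A : Set α) (n : ℕ) (x : α) :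
    0 ≤ visitFrequency f A n x := by
  rw [visitFrequency_eq_div]
  positivity

lemma hasZeroFrequency_apply_iff : HasZeroFrequency f A (f x) ↔ HasZeroFrequency f A x := by
  have hbounded : Bornology.IsBounded (range (A.indicator (1 : α → ℝ))) :=
    (Metric.isBounded_Icc (0 : ℝ) 1).subset <| range_subset_iff.2 fun z =>
      ⟨indicator_nonneg (fun _ _ => zero_le_one) z, indicator_le_self' (fun _ _ => zero_le_one) z⟩
  have hdiff : Tendsto (fun n => visitFrequency f A n (f x) - visitFrequency f A n x)
      atTop (𝓝 0) :=
    tendsto_birkhoffAverage_apply_sub_birkhoffAverage' ℝ hbounded f x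
  unfold HasZeroFrequency
  refine ⟨fun h => ?_, fun h => ?_⟩
  · simpa only [sub_sub_cancel, sub_zero] using h.sub hdiff
  · simpa only [sub_add_cancel, add_zero] using hdiff.add h

lemma hasZeroFrequency_preimage_iff :
    HasZeroFrequency f (f ⁻¹' A) x ↔ HasZeroFrequency f A x := by
  have hshift (n : ℕ) : visitFrequency f (f ⁻¹' A) n x = visitFrequency f A n (f x) := by
    unfold visitFrequency birkhoffAverage
    rw [← birkhoffSum_comp_self]
    rfl
  rw [← hasZeroFrequency_apply_iff (A := A), HasZeroFrequency, HasZeroFrequency, funext hshift]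

lemma HasZeroFrequency.preimage_iterate (h : HasZeroFrequency f A x) (r : ℕ) :
    HasZeroFrequency f (f^[r] ⁻¹' A) x := by
  induction r with
  | zero => exact h
  | succ r ih =>
    rw [Function.iterate_succ, preimage_comp]
    exact hasZeroFrequency_preimage_iff.2 ih

lemma visitFrequency_le_sum {s : Finset ι} {t : ι → Set α} (hA : A ⊆ ⋃ i ∈ s, t i) (n : ℕ) :
    visitFrequency f A n x ≤ ∑ i ∈ s, visitFrequency f (t i) n x := by
  have hnonneg (S : Set α) (z : α) : 0 ≤ S.indicator (1 : α → ℝ) z :=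
    indicator_nonneg (fun _ _ => zero_le_one) z
  have hind (z : α) : A.indicator (1 : α → ℝ) z ≤ ∑ i ∈ s, (t i).indicator 1 z := by
    refine indicator_apply_le' (fun hz => ?_) fun _ => Finset.sum_nonneg fun i _ => hnonneg _ z
    obtain ⟨i, hi, hzi⟩ := mem_iUnion₂.1 (hA hz)
    rw [← indicator_of_mem hzi (1 : α → ℝ)]
    exact Finset.single_le_sum (fun i _ => hnonneg (t i) z) hi
  simp only [visitFrequency, birkhoffAverage, birkhoffSum]
  rw [← Finset.smul_sum, Finset.sum_comm]
  gcongr with k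
  exact hind _

lemma HasZeroFrequency.of_hits {B : ℕ} (hY : HasZeroFrequency f Y x)
    (hA : ∀ z ∈ A \ Y, ∃ n ≤ B, f^[n] z ∈ Y) : HasZeroFrequency f A x := by
  have hcover : A ⊆ ⋃ n ∈ Finset.range (B + 1), f^[n] ⁻¹' Y := by
    intro z hz
    obtain ⟨n, hn, hzn⟩ : ∃ n ≤ B, f^[n] z ∈ Y := by
      by_cases hzY : z ∈ Y
      · exact ⟨0, Nat.zero_le B, hzY⟩
      · exact hA z ⟨hz, hzY⟩
    exact mem_iUnion₂.2 ⟨n, Finset.mem_range_succ_iff.2 hn, hzn⟩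
  have hsum : Tendsto
      (fun n => ∑ r ∈ Finset.range (B + 1), visitFrequency f (f^[r] ⁻¹' Y) n x) atTop (𝓝 0) := by
    simpa only [Finset.sum_const_zero] using
      tendsto_finsetSum (Finset.range (B + 1)) fun r _ => hY.preimage_iterate r
  exact squeeze_zero (fun n => visitFrequency_nonneg f A n x) (visitFrequency_le_sum hcover) hsum

end ZeroFrequency

section ReturnTimes

variable {α ι : Type*} {f : α → α} {Y : Set α} {x y : α}

lemma hitTime_spec (h : ∃ n, 1 ≤ n ∧ f^[n] y ∈ Y) :
    1 ≤ hitTime f Y y ∧ f^[hitTime f Y y] y ∈ Y :=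
  Nat.sInf_mem (s := {n | 1 ≤ n ∧ f^[n] y ∈ Y}) h

lemma tauJ_self (h : ∃ n, 1 ≤ n ∧ f^[n] y ∈ Y) : tauJ f Y Y y = 1 := by
  obtain ⟨hpos, hmem⟩ := hitTime_spec h
  rw [tauJ, Finset.sum_eq_single_of_mem _ (Finset.right_mem_Icc.2 hpos), indicator_of_mem hmem]
  intro n hn hne
  refine indicator_of_notMem (fun hnY => hne ?_) _
  rw [Finset.mem_Icc] at hn
  exact hn.2.antisymm (Nat.sInf_le ⟨hn.1, hnY⟩)

lemma sum_tauJ_add_one_le [Fintype ι] {s : ι → Set α} (hs : Pairwise (Function.onFun Disjoint s))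
    (hsY : ∀ i, Disjoint (s i) Y) (h : ∃ n, 1 ≤ n ∧ f^[n] y ∈ Y) :
    ∑ i, tauJ f Y (s i) y + 1 ≤ hitTime f Y y := by
  have hpoint (z : α) :
      ∑ i, (s i).indicator (fun _ => 1) z + Y.indicator (fun _ => 1) z ≤ 1 := by
    have hdisj : Disjoint (⋃ i ∈ Finset.univ, s i) Y := by simpa using hsY
    rw [← Finset.indicator_biUnion_apply Finset.univ s fun i _ j _ hij => hs hij,
      ← congrFun (indicator_union_of_disjoint hdisj _) z]
    exact indicator_le_self' (fun _ _ => zero_le_one) z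
  calc ∑ i, tauJ f Y (s i) y + 1 = ∑ i, tauJ f Y (s i) y + tauJ f Y Y y := by rw [tauJ_self h]
    _ = ∑ n ∈ Finset.Icc 1 (hitTime f Y y), (∑ i, (s i).indicator (fun _ => 1) (f^[n] y) +
          Y.indicator (fun _ => 1) (f^[n] y)) := by
      rw [Finset.sum_add_distrib, Finset.sum_comm]; rfl
    _ ≤ ∑ n ∈ Finset.Icc 1 (hitTime f Y y), 1 := Finset.sum_le_sum fun n _ => hpoint _
    _ = hitTime f Y y := by simp

lemma tauJ_eq_visitCount (f : α → α) (Y A : Set α) (y : α) :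
    tauJ f Y A y = visitCount f (f ⁻¹' A) (hitTime f Y y) y := by
  rw [tauJ, ← Finset.Ico_add_one_right_eq_Icc, Finset.sum_Ico_eq_sum_range, visitCount,
    birkhoffSum, Nat.add_sub_cancel]
  simp only [add_comm 1, Function.iterate_succ_apply']
  rfl

lemma retMap_iterate (f : α → α) (Y : Set α) (k : ℕ) (x : α) :
    (retMap f Y)^[k] x = f^[tauSum f Y k x] x :=
  iterate_timeChange f (hitTime f Y) k x

lemma tauJSum_eq_visitCount (f : α → α) (Y A : Set α) (k : ℕ) (x : α) :
    tauJSum f Y A k x = visitCount f (f ⁻¹' A) (tauSum f Y k x) x := by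
  simp only [tauJSum, tauJ_eq_visitCount]
  exact birkhoffSum_timeChange f (hitTime f Y) ((f ⁻¹' A).indicator 1) k x

lemma exists_hit_iterate_retMap (h : ∃ᶠ n in atTop, f^[n] x ∈ Y) (k : ℕ) :
    ∃ n, 1 ≤ n ∧ f^[n] ((retMap f Y)^[k] x) ∈ Y := by
  obtain ⟨n, hn, hnY⟩ := frequently_atTop.1 h (tauSum f Y k x + 1)
  refine ⟨n - tauSum f Y k x, by lia, ?_⟩
  rwa [retMap_iterate, ← Function.iterate_add_apply, Nat.sub_add_cancel (by lia)]

lemma iterate_tauSum_succ_mem (h : ∃ᶠ n in atTop, f^[n] x ∈ Y) (k : ℕ) :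
    f^[tauSum f Y (k + 1) x] x ∈ Y := by
  rw [← retMap_iterate, Function.iterate_succ_apply']
  exact (hitTime_spec (exists_hit_iterate_retMap h k)).2

lemma visitCount_tauSum (h : ∃ᶠ n in atTop, f^[n] x ∈ Y) (k : ℕ) :
    visitCount f (f ⁻¹' Y) (tauSum f Y k x) x = k := by
  simp [← tauJSum_eq_visitCount, tauJSum, tauJ_self (exists_hit_iterate_retMap h _)]

lemma le_tauSum (h : ∃ᶠ n in atTop, f^[n] x ∈ Y) (k : ℕ) : k ≤ tauSum f Y k x := by
  calc k = ∑ j ∈ Finset.range k, 1 := by simp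
    _ ≤ tauSum f Y k x := Finset.sum_le_sum fun j _ =>
        (hitTime_spec (exists_hit_iterate_retMap h j)).1

lemma tauSum_visitCount_le (h : ∃ᶠ n in atTop, f^[n] x ∈ Y) (n : ℕ) :
    tauSum f Y (visitCount f (f ⁻¹' Y) n x) x ≤ n := by
  rcases hk : visitCount f (f ⁻¹' Y) n x with _ | k
  · exact Nat.zero_le n
  by_contra! hlt
  obtain ⟨m, hm⟩ := Nat.exists_eq_add_one.2 (Nat.zero_lt_of_lt hlt)
  have hmY : f^[m] x ∈ f ⁻¹' Y := by
    rw [mem_preimage, ← Function.iterate_succ_apply' f, Nat.succ_eq_add_one, ← hm]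
    exact iterate_tauSum_succ_mem h k
  have hvisits : visitCount f (f ⁻¹' Y) m x + 1 = k + 1 := by
    rw [← visitCount_succ_of_mem hmY, ← hm, visitCount_tauSum h]
  have hmono : visitCount f (f ⁻¹' Y) n x ≤ visitCount f (f ⁻¹' Y) m x :=
    monotone_visitCount f (f ⁻¹' Y) x (by lia)
  lia

lemma tendsto_visitCount_atTop (h : ∃ᶠ n in atTop, f^[n] x ∈ Y) :
    Tendsto (fun n => visitCount f (f ⁻¹' Y) n x) atTop atTop :=
  (monotone_visitCount f (f ⁻¹' Y) x).tendsto_atTop_atTop fun k =>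
    ⟨tauSum f Y k x, (visitCount_tauSum h k).ge⟩

lemma hasZeroFrequency_of_tendsto_div_tauSum (h : ∃ᶠ n in atTop, f^[n] x ∈ Y)
    (hlim : Tendsto (fun k : ℕ => (k / tauSum f Y k x : ℝ)) atTop (𝓝 0)) :
    HasZeroFrequency f Y x := by
  rw [← hasZeroFrequency_preimage_iff]
  refine squeeze_zero (fun n => visitFrequency_nonneg _ _ n x) (fun n => ?_)
    (hlim.comp (tendsto_visitCount_atTop h))
  rw [visitFrequency_eq_div, Function.comp_apply]
  rcases (visitCount f (f ⁻¹' Y) n x).eq_zero_or_pos with hzero | hpos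
  · simp [hzero]
  · have hτpos := hpos.trans_le (le_tauSum h (visitCount f (f ⁻¹' Y) n x))
    gcongr
    exact tauSum_visitCount_le h n

lemma sum_tauJSum_add_le [Fintype ι] {s : ι → Set α} (hs : Pairwise (Function.onFun Disjoint s))
    (hsY : ∀ i, Disjoint (s i) Y) (h : ∃ᶠ n in atTop, f^[n] x ∈ Y) (k : ℕ) :
    ∑ i, tauJSum f Y (s i) k x + k ≤ tauSum f Y k x := by
  calc ∑ i, tauJSum f Y (s i) k x + k
      = ∑ j ∈ Finset.range k, (∑ i, tauJ f Y (s i) ((retMap f Y)^[j] x) + 1) := by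
        simp [tauJSum, Finset.sum_add_distrib, Finset.sum_comm (γ := ι)]
    _ ≤ tauSum f Y k x := Finset.sum_le_sum fun j _ =>
        sum_tauJ_add_one_le hs hsY (exists_hit_iterate_retMap h j)

variable {d : ℕ} {Xp : Fin d → Set α}

lemma sum_tauRatio_add_div_le_one (hXp : Pairwise (Function.onFun Disjoint Xp))
    (hXY : ∀ i, Disjoint (Xp i) Y) (h : ∃ᶠ n in atTop, f^[n] x ∈ Y) (k : ℕ) :
    ∑ i, tauRatio f Y Xp k x i + (k / tauSum f Y k x : ℝ) ≤ 1 := by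
  simp only [tauRatio]
  rw [← Finset.sum_div, ← add_div]
  refine div_le_one_of_le₀ ?_ (Nat.cast_nonneg _)
  exact_mod_cast sum_tauJSum_add_le hXp hXY h k

lemma tauRatio_mem_Icc (hXp : Pairwise (Function.onFun Disjoint Xp))
    (hXY : ∀ i, Disjoint (Xp i) Y) (h : ∃ᶠ n in atTop, f^[n] x ∈ Y) (k : ℕ) :
    tauRatio f Y Xp k x ∈ Icc (0 : Fin d → ℝ) 1 := by
  have hnonneg (i : Fin d) : 0 ≤ tauRatio f Y Xp k x i := by unfold tauRatio; positivity
  refine ⟨hnonneg, fun i => ?_⟩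
  calc tauRatio f Y Xp k x i ≤ ∑ i, tauRatio f Y Xp k x i :=
        Finset.single_le_sum (fun i _ => hnonneg i) (Finset.mem_univ i)
    _ ≤ ∑ i, tauRatio f Y Xp k x i + (k / tauSum f Y k x : ℝ) :=
        le_add_of_nonneg_right (by positivity)
    _ ≤ 1 := sum_tauRatio_add_div_le_one hXp hXY h k

lemma tendsto_div_tauSum_of_Tset_subset (hXp : Pairwise (Function.onFun Disjoint Xp))
    (hXY : ∀ i, Disjoint (Xp i) Y) (h : ∃ᶠ n in atTop, f^[n] x ∈ Y)
    (hT : Tset f Y Xp x ⊆ simplexS d) :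
    Tendsto (fun k : ℕ => (k / tauSum f Y k x : ℝ)) atTop (𝓝 0) := by
  have hsum : Tendsto (fun k => ∑ i, tauRatio f Y Xp (k + 1) x i) atTop (𝓝 1) :=
    tendsto_comp_of_forall_subseq_limit isCompact_Icc.isSeqCompact
      (fun k => tauRatio_mem_Icc hXp hXY h (k + 1))
      (continuous_finsetSum _ fun i _ => continuous_apply i)
      fun φ p hφ hp => (hT ⟨φ, hφ, hp⟩).2
  rw [← tendsto_add_atTop_iff_nat 1]
  refine squeeze_zero (fun k => by positivity) (fun k => ?_)
    (sub_self (1 : ℝ) ▸ tendsto_const_nhds.sub hsum)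
  exact le_sub_iff_add_le'.2 (sum_tauRatio_add_div_le_one hXp hXY h (k + 1))

end ReturnTimes

section EmpiricalMeasures

variable {Z : Type*} [MeasurableSpace Z]

instance isProbabilityMeasure_empMeasure_succ (f : Z → Z) (n : ℕ) (x : Z) :
    IsProbabilityMeasure (empMeasure f (n + 1) x) := by
  refine ⟨?_⟩
  simp only [empMeasure, Measure.smul_apply, Measure.coe_finsetSum, Finset.sum_apply,
    measure_univ, Finset.sum_const, Finset.card_range, nsmul_eq_mul, mul_one, smul_eq_mul]
  exact ENNReal.inv_mul_cancel (by simp) (ENNReal.natCast_ne_top _)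

lemma empMeasure_real_apply [MeasurableSingletonClass Z] (f : Z → Z) (n : ℕ) (x : Z) (A : Set Z) :
    (empMeasure f n x).real A = visitFrequency f A n x := by
  have hdirac (z : Z) : (Measure.dirac z A).toReal = A.indicator 1 z := by
    rw [Measure.dirac_apply]
    by_cases hz : z ∈ A <;> simp [hz]
  rw [measureReal_def, empMeasure, Measure.smul_apply, smul_eq_mul, ENNReal.toReal_mul,
    Measure.coe_finsetSum, Finset.sum_apply, ENNReal.toReal_sum fun k _ => measure_ne_top _ _]
  simp only [hdirac, ENNReal.toReal_inv, ENNReal.toReal_natCast]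
  rfl

lemma exists_eq_nuMeasure [MeasurableSingletonClass Z] {ν : Measure Z} [IsProbabilityMeasure ν]
    {d : ℕ} {ξ : Fin d → Z} (hξ : Function.Injective ξ) (hν : ν (range ξ)ᶜ = 0) :
    ∃ p ∈ simplexS d, ν = nuMeasure ξ p := by
  have hdisj : Pairwise (Function.onFun Disjoint fun j => ({ξ j} : Set Z)) := fun i j hij =>
    disjoint_singleton.2 (hξ.ne hij)
  have hmeas : MeasurableSet (range ξ) := (finite_range ξ).measurableSet
  refine ⟨fun j => ν.real {ξ j}, ⟨fun j => ⟨measureReal_nonneg, measureReal_le_one⟩, ?_⟩, ?_⟩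
  · rw [← measureReal_iUnion_fintype hdisj fun j => measurableSet_singleton _,
      iUnion_singleton_eq_range, measureReal_def, (prob_compl_eq_zero_iff hmeas).1 hν,
      ENNReal.toReal_one]
  · calc ν = ν.restrict (⋃ j, {ξ j}) := by
          rw [iUnion_singleton_eq_range, Measure.restrict_eq_self_of_ae_mem (s := range ξ) hν]
      _ = ∑ j, ν.restrict {ξ j} := by
          rw [Measure.restrict_iUnion hdisj fun j => measurableSet_singleton _,
            Measure.sum_fintype]
      _ = nuMeasure ξ fun j => ν.real {ξ j} := by
          simp only [Measure.restrict_singleton, nuMeasure, ofReal_measureReal (measure_ne_top ν _)]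

variable [MetricSpace Z] {μ : ℕ → Measure Z} {ν : Measure Z}

lemma WeakTendsto.isProbabilityMeasure [∀ n, IsProbabilityMeasure (μ n)] (h : WeakTendsto μ ν) :
    IsProbabilityMeasure ν := by
  have hone : Tendsto (fun _ : ℕ => (1 : ℝ)) atTop (𝓝 (ν.real univ)) := by
    simpa using h (BoundedContinuousFunction.const Z 1)
  exact ⟨(ENNReal.toReal_eq_one_iff _).1 (tendsto_nhds_unique hone tendsto_const_nhds)⟩

lemma WeakTendsto.measure_eq_zero_of_isOpen [OpensMeasurableSpace Z]
    [∀ n, IsProbabilityMeasure (μ n)] (h : WeakTendsto μ ν) {U : Set Z} (hU : IsOpen U)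
    (hlim : Tendsto (fun n => (μ n).real U) atTop (𝓝 0)) : ν U = 0 := by
  have hν := h.isProbabilityMeasure
  let P (n : ℕ) : ProbabilityMeasure Z := ⟨μ n, inferInstance⟩
  have hconv : Tendsto P atTop (𝓝 ⟨ν, hν⟩) :=
    ProbabilityMeasure.tendsto_iff_forall_integral_tendsto.2 h
  have hlim' : Tendsto (fun n => μ n U) atTop (𝓝 0) := by
    rw [← ENNReal.ofReal_zero]
    exact (ENNReal.tendsto_ofReal hlim).congr fun n => ofReal_measureReal
  exact le_zero_iff.1 <|
    (ProbabilityMeasure.le_liminf_measure_open_of_tendsto hconv hU).trans_eq hlim'.liminf_eq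

variable {f : Z → Z} {x : Z}

lemma isProbabilityMeasure_of_mem_Vset (hν : ν ∈ Vset f x) : IsProbabilityMeasure ν :=
  let ⟨_, _, hlim⟩ := hν
  hlim.isProbabilityMeasure

lemma measure_eq_zero_of_mem_Vset [OpensMeasurableSpace Z] (hν : ν ∈ Vset f x) {U : Set Z}
    (hU : IsOpen U) (hfreq : HasZeroFrequency f U x) : ν U = 0 := by
  obtain ⟨φ, hφ, hlim⟩ := hν
  refine hlim.measure_eq_zero_of_isOpen hU ?_
  simp only [empMeasure_real_apply]
  exact hfreq.comp ((tendsto_add_atTop_nat 1).comp hφ.tendsto_atTop)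

end EmpiricalMeasures

theorem stmt6_general {Z : Type*} [MetricSpace Z] [LocallyCompactSpace Z]
    [SecondCountableTopology Z] [MeasurableSpace Z] [OpensMeasurableSpace Z]
    {f : Z → Z} {Y : Set Z} {d : ℕ} {ξ : Fin d → Z} (hξ : Function.Injective ξ)
    {Xp : Fin d → Set Z} (hXp : Pairwise (Function.onFun Disjoint Xp))
    (hXY : ∀ j, Disjoint (Xp j) Y)
    (hbd : ∀ K : Set Z, IsCompact K → (∀ j, ξ j ∉ K) →
      ∃ B : ℕ, ∀ z ∈ K \ Y, ∃ n, 1 ≤ n ∧ n ≤ B ∧ f^[n] z ∈ Y)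
    {x : Z} (hrec : ∃ᶠ n in atTop, f^[n] x ∈ Y) (hT : Tset f Y Xp x ⊆ simplexS d) :
    Vset f x ⊆ {ν | ∃ p ∈ simplexS d, ν = nuMeasure ξ p} := by
  intro ν hν
  have hprob : IsProbabilityMeasure ν := isProbabilityMeasure_of_mem_Vset hν
  have hY : HasZeroFrequency f Y x := hasZeroFrequency_of_tendsto_div_tauSum hrec
    (tendsto_div_tauSum_of_Tset_subset hXp hXY hrec hT)
  refine exists_eq_nuMeasure hξ (measure_null_of_locally_null _ fun z hz => ?_)
  obtain ⟨K, hK, hzK, hKξ⟩ := exists_compact_subset (finite_range ξ).isClosed.isOpen_compl hz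
  obtain ⟨B, hB⟩ := hbd K hK fun j hj => hKξ hj (mem_range_self j)
  have hKfreq : HasZeroFrequency f (interior K) x := hY.of_hits fun w hw =>
    (hB w ⟨interior_subset hw.1, hw.2⟩).imp fun _ hn => hn.2
  exact ⟨interior K, mem_nhdsWithin_of_mem_nhds (isOpen_interior.mem_nhds hzK),
    measure_eq_zero_of_mem_Vset hν isOpen_interior hKfreq⟩

/-- If `T(x) ⊆ S`, then every weak* limit point of the empirical measures
is a convex combination `∑_j p_j δ_{ξ_j}` with `p̄ ∈ S`. -/
theorem stmt6 (f : X → X) (hf : Measurable f)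
    (Y : Set X) (hYc : IsCompact Y)
    (d : ℕ) (hd : 1 ≤ d) (ξ : Fin d → X) (hξ : Function.Injective ξ)
    (hξY : ∀ j, ξ j ∉ Y)
    (Xp : Fin d → Set X) (hXm : ∀ j, MeasurableSet (Xp j))
    (hXd : Pairwise (Function.onFun Disjoint Xp))
    (hXU : (⋃ j, Xp j) = Yᶜ)
    (hξint : ∀ j, ξ j ∈ interior (Xp j))
    (hξcl : ∀ i j, i ≠ j → ξ i ∉ closure (Xp j))
    (hnc : ∀ z : X, ∀ n m : ℕ, ∀ i j, i ≠ j →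
      f^[n] z ∈ Xp i → f^[n + m] z ∈ Xp j → ∃ k, 0 < k ∧ k < m ∧ f^[n + k] z ∈ Y)
    (hbd : ∀ K : Set X, IsCompact K → (∀ j, ξ j ∉ K) →
      ∃ B : ℕ, ∀ z ∈ K \ Y, ∃ n, 1 ≤ n ∧ n ≤ B ∧ f^[n] z ∈ Y)
    (x : X) (hxY : x ∈ Y) (hxrec : ∀ N : ℕ, ∃ n, N ≤ n ∧ 1 ≤ n ∧ f^[n] x ∈ Y)
    (hT : Tset f Y Xp x ⊆ simplexS d) :
    Vset f x ⊆ {ν | ∃ p ∈ simplexS d, ν = nuMeasure ξ p} :=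
  stmt6_general hξ hXd (fun j => subset_compl_iff_disjoint_right.1 (hXU ▸ subset_iUnion Xp j)) hbd
    (frequently_atTop.2 fun N => (hxrec N).imp fun _ hn => ⟨hn.1, hn.2.2⟩) hT
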